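/- arXiv:2603.10509 — 3 statements merged into one kernel-verified Lean document; each statement's English description precedes it below -/
import Mathlib

section
/- Let L be a symmetric real N×N matrix satisfying the EEP condition with respect to a partition of the N nodes into k nonempty clusters, let σ ∈ ℝ, and let F_1,…,F_k, H_1,…,H_k ∈ ℝ^{m×m} be arbitrary real m×m matrices. Define the operator 𝓛 = Σ_{l=1}^k E^l ⊗ F_l − σ Σ_{l=1}^k (L E^l) ⊗ H_l ∈ ℝ^{Nm×Nm}, where ⊗ denotes the Kronecker product. Then the synchronization subspace S is invariant under 𝓛, i.e., 𝓛 x ∈ S for every x ∈ S. -/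
open Matrix Kronecker BigOperators

/-!
The EEP condition makes a matrix act on functions of the nodes that are constant on clusters: such
a function can be pulled out of the sum over each cluster, leaving a row sum of the matrix. Hence
matrices satisfying it are closed under products, and both `E^l` and `L E^l` satisfy it. If `A`
satisfies it, then `A ⊗ B` preserves the synchronization subspace for every `B`, because `B` only
mixes the components within a node; `𝓛` is a linear combination of such Kronecker products.
-/

section Equitable

variable {ι κ R : Type*} [Fintype ι] [DecidableEq κ]

/-- The EEP (external equitable partition) condition for a matrix `L`, where the partition of the
nodes is the one into the fibres of `c`: the sum of row `i` of `L` over any given cluster depends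
only on the cluster of `i`. -/
def IsExternallyEquitable [AddCommMonoid R] (c : ι → κ) (L : Matrix ι ι R) : Prop :=
  ∀ β, (fun i ↦ ∑ p with c p = β, L i p).FactorsThrough c

/-- The diagonal matrix `E^l`, which projects onto the nodes of the cluster `l`. -/
def clusterProjection [DecidableEq ι] [Zero R] [One R] (c : ι → κ) (l : κ) : Matrix ι ι R :=
  diagonal fun i ↦ if c i = l then 1 else 0

variable {c : ι → κ}

theorem IsExternallyEquitable.factorsThrough_mulVec [NonUnitalNonAssocSemiring R]
    {L : Matrix ι ι R} (hL : IsExternallyEquitable c L) {v : ι → R} (hv : v.FactorsThrough c) :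
    (L *ᵥ v).FactorsThrough c := by
  have mulVec_eq_sum_clusters (i : ι) : (L *ᵥ v) i =
      ∑ β ∈ Finset.univ.image c, (∑ p with c p = β, L i p) * Function.extend c v 0 β := by
    rw [mulVec, dotProduct, ← Finset.sum_fiberwise_of_maps_to
      fun p _ ↦ Finset.mem_image_of_mem c (Finset.mem_univ p)]
    refine Finset.sum_congr rfl fun β _ ↦ ?_
    rw [Finset.sum_mul]
    refine Finset.sum_congr rfl fun p hp ↦ ?_
    rw [← (Finset.mem_filter.mp hp).2, hv.extend_apply]
  intro i j hij
  simp only [mulVec_eq_sum_clusters]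
  exact Finset.sum_congr rfl fun β _ ↦ congrArg (· * _) (hL β hij)

theorem IsExternallyEquitable.mul [NonUnitalSemiring R] {L M : Matrix ι ι R}
    (hL : IsExternallyEquitable c L) (hM : IsExternallyEquitable c M) :
    IsExternallyEquitable c (L * M) := by
  intro β
  have cluster_sum_mul : (fun i ↦ ∑ q with c q = β, (L * M) i q) =
      L *ᵥ fun p ↦ ∑ q with c q = β, M p q := by
    ext i
    simp only [mul_apply, mulVec, dotProduct, Finset.mul_sum]
    exact Finset.sum_comm
  rw [cluster_sum_mul]
  exact hL.factorsThrough_mulVec (hM β)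

theorem isExternallyEquitable_diagonal [DecidableEq ι] [AddCommMonoid R] {d : ι → R}
    (hd : d.FactorsThrough c) : IsExternallyEquitable c (diagonal d) := by
  intro β i j hij
  simp [diagonal_apply, hij, hd hij]

theorem isExternallyEquitable_clusterProjection [DecidableEq ι] [AddCommMonoid R] [One R] (l : κ) :
    IsExternallyEquitable c (clusterProjection c l : Matrix ι ι R) :=
  isExternallyEquitable_diagonal fun i j hij ↦ by rw [hij]

end Equitable

section Synchronization

variable {ι κ μ ν R : Type*}

/-- The synchronization subspace: states whose components agree on any two nodes of the same
cluster, the clusters being the fibres of `c`. -/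
def syncSubspace (R μ : Type*) [Semiring R] (c : ι → κ) : Submodule R (ι × μ → R) where
  carrier := {x | ∀ a, (fun i ↦ x (i, a)).FactorsThrough c}
  zero_mem' _ _ _ _ := rfl
  add_mem' hx hy a _ _ hij := congrArg₂ (· + ·) (hx a hij) (hy a hij)
  smul_mem' r _ hx a _ _ hij := congrArg (r • ·) (hx a hij)

theorem kronecker_mulVec_apply {ι' : Type*} [Fintype ι] [Fintype ν] [NonUnitalSemiring R]
    (A : Matrix ι' ι R) (B : Matrix μ ν R) (x : ι × ν → R) (i : ι') (a : μ) :
    ((A ⊗ₖ B) *ᵥ x) (i, a) = (A *ᵥ fun p ↦ (B *ᵥ fun b ↦ x (p, b)) a) i := by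
  simp only [mulVec, dotProduct, Fintype.sum_prod_type, kronecker_apply, Finset.mul_sum, mul_assoc]

variable [Fintype ι] [DecidableEq κ] {c : ι → κ}

theorem IsExternallyEquitable.kronecker_mulVec_mem_syncSubspace [Fintype ν] [Semiring R]
    {A : Matrix ι ι R} (hA : IsExternallyEquitable c A) (B : Matrix μ ν R) {x : ι × ν → R}
    (hx : x ∈ syncSubspace R ν c) : (A ⊗ₖ B) *ᵥ x ∈ syncSubspace R μ c := by
  intro a
  simp only [kronecker_mulVec_apply]
  refine hA.factorsThrough_mulVec fun i j hij ↦ ?_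
  have node_states_eq : (fun b ↦ x (i, b)) = fun b ↦ x (j, b) := funext fun b ↦ hx b hij
  rw [node_states_eq]

theorem synchronization_subspace_invariant_general [DecidableEq ι] [Fintype κ] [Fintype μ] [Ring R]
    {L : Matrix ι ι R} (hL : IsExternallyEquitable c L) (σ : R) (F H : κ → Matrix μ μ R)
    {x : ι × μ → R} (hx : x ∈ syncSubspace R μ c) :
    (∑ l, clusterProjection c l ⊗ₖ F l - σ • ∑ l, (L * clusterProjection c l) ⊗ₖ H l) *ᵥ x ∈
      syncSubspace R μ c := by
  have hE (l : κ) : IsExternallyEquitable c (clusterProjection c l : Matrix ι ι R) :=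
    isExternallyEquitable_clusterProjection l
  rw [sub_mulVec, smul_mulVec, sum_mulVec, sum_mulVec]
  exact sub_mem (sum_mem fun l _ ↦ (hE l).kronecker_mulVec_mem_syncSubspace (F l) hx)
    (Submodule.smul_mem _ σ <|
      sum_mem fun l _ ↦ (hL.mul (hE l)).kronecker_mulVec_mem_syncSubspace (H l) hx)

end Synchronization

/-- For a symmetric matrix `L` satisfying the EEP condition with respect to a
partition into `k` nonempty clusters (encoded by the surjective cluster map `c`), the operator
`𝓛 = ∑ l, E^l ⊗ F_l − σ • ∑ l, (L E^l) ⊗ H_l` leaves the synchronization subspace `S`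
(vectors constant on clusters componentwise) invariant. -/
theorem synchronization_subspace_invariant
    {N k m : ℕ} (c : Fin N → Fin k) (hc : Function.Surjective c)
    (L : Matrix (Fin N) (Fin N) ℝ) (hL : L.IsSymm)
    (hEEP : ∀ (β : Fin k) (i j : Fin N), c i = c j →
      ∑ p ∈ Finset.univ.filter (fun p => c p = β), L i p =
      ∑ p ∈ Finset.univ.filter (fun p => c p = β), L j p)
    (σ : ℝ) (F H : Fin k → Matrix (Fin m) (Fin m) ℝ)
    (E : Fin k → Matrix (Fin N) (Fin N) ℝ)
    (hE : ∀ l, E l = Matrix.diagonal (fun i => if c i = l then (1 : ℝ) else 0))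
    (𝓛 : Matrix (Fin N × Fin m) (Fin N × Fin m) ℝ)
    (h𝓛 : 𝓛 = (∑ l, (E l) ⊗ₖ (F l)) - σ • ∑ l, ((L * E l) ⊗ₖ (H l)))
    (x : Fin N × Fin m → ℝ)
    (hx : ∀ (i j : Fin N) (a : Fin m), c i = c j → x (i, a) = x (j, a)) :
    ∀ (i j : Fin N) (a : Fin m), c i = c j →
      (𝓛.mulVec x) (i, a) = (𝓛.mulVec x) (j, a) := by
  obtain rfl : E = clusterProjection c := funext hE
  subst h𝓛
  intro i j a hij
  exact synchronization_subspace_invariant_general (fun β _ _ ↦ hEEP β _ _) σ F H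
    (fun a _ _ ↦ hx _ _ a) a hij
end

section
/- Let B ∈ ℝ^{k×k}, σ ∈ ℝ, let F, H : ℝ^m → ℝ^m be odd maps, and define the quotient vector field G_B(s)_i = F(s_i) − σ Σ_{j=1}^k B_{ij} H(s_j) on (ℝ^m)^k. Fix a cluster index i and suppose there is an involution π on the remaining indices {j : j ≠ i} such that s_{π(j)} = −s_j and B_{i,π(j)} = B_{i,j} for all j ≠ i. If s_i = 0, then G_B(s)_i = 0; that is, the amplitude-death state of cluster i is invariant when its neighboring clusters split into antisynchronized (or zero) states. -/
open Matrix BigOperators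

/-!
The permutation of the other clusters sends each coupling term to its negative, so their sum equals
its own negative and vanishes in the absence of torsion. Fixed points of the permutation need no
separate treatment: there the coupling term is its own negative.
-/

section OddCoupling

variable {ι R E V : Type*}

/-- The quotient vector field `G_B` of a network of clusters with internal dynamics `F`, coupling
function `H`, coupling matrix `B` and coupling strength `σ`. The space `E` of states and the space
`V` of velocities are kept apart; a vector field on `ι → E` is the case `V = E`. -/
def quotientVectorField [Fintype ι] [AddCommGroup V] [SMul R V] (B : Matrix ι ι R) (σ : R)
    (F H : E → V) (s : ι → E) (i : ι) : V :=
  F (s i) - σ • ∑ j, B i j • H (s j)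

variable [AddCommGroup V] [IsAddTorsionFree V]

lemma sum_eq_zero_of_injOn_of_comp_eq_neg {t : Finset ι} {π : ι → ι} {f : ι → V}
    (hmaps : Set.MapsTo π t t) (hinj : Set.InjOn π t) (hf : ∀ j ∈ t, f (π j) = -f j) :
    ∑ j ∈ t, f j = 0 := by
  have hsurj : Set.SurjOn π t t := Finset.surjOn_of_injOn_of_card_le π hmaps hinj le_rfl
  refine neg_eq_self.mp ?_
  calc -∑ j ∈ t, f j = ∑ j ∈ t, -f j := (Finset.sum_neg_distrib f).symm
    _ = ∑ j ∈ t, f j := Finset.sum_nbij π hmaps hinj hsurj fun j hj ↦ (hf j hj).symm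

variable [DistribSMul R V]

lemma sum_smul_eq_zero_of_antisynchronized [Neg E] {H : E → V} (hH : H.Odd) {t : Finset ι}
    {π : ι → ι} (hmaps : Set.MapsTo π t t) (hinj : Set.InjOn π t) {s : ι → E} {b : ι → R}
    (hs : ∀ j ∈ t, s (π j) = -s j) (hb : ∀ j ∈ t, b (π j) = b j) :
    ∑ j ∈ t, b j • H (s j) = 0 := by
  refine sum_eq_zero_of_injOn_of_comp_eq_neg hmaps hinj fun j hj ↦ ?_
  rw [hs j hj, hb j hj, hH.eq, smul_neg]

theorem amplitude_death_invariant_under_antisynchronized_neighbors_general [Fintype ι]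
    [NegZeroClass E] (B : Matrix ι ι R) (σ : R) {F H : E → V} (hF : F 0 = 0) (hH : H.Odd) {i : ι}
    {π : ι → ι} (hmaps : Set.MapsTo π {i}ᶜ {i}ᶜ) (hinj : Set.InjOn π {i}ᶜ) {s : ι → E}
    (hs : ∀ j, j ≠ i → s (π j) = -s j) (hB : ∀ j, j ≠ i → B i (π j) = B i j) (hsi : s i = 0) :
    quotientVectorField B σ F H s i = 0 := by
  classical
  have hneighbors : ∑ j ∈ {i}ᶜ, B i j • H (s j) = 0 :=
    sum_smul_eq_zero_of_antisynchronized hH (by simpa using hmaps) (by simpa using hinj)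
      (by simpa using hs) (by simpa using hB)
  have hself : B i i • H (s i) = 0 := by rw [hsi, hH.map_zero, smul_zero]
  rw [quotientVectorField, Fintype.sum_eq_add_sum_compl i, hself, hneighbors, hsi, hF, add_zero,
    smul_zero, sub_zero]

end OddCoupling

/-- For odd maps `F`, `H`, if the indices other than `i` admit an involution `π`
(fixing the complement of `i`) under which the states are antisynchronized (`s_{π(j)} = −s_j`)
and the row `B_i` is invariant (`B_{i,π(j)} = B_{i,j}`), then the amplitude-death state
`s_i = 0` of cluster `i` is invariant: `G_B(s)_i = 0`. -/
theorem amplitude_death_invariant_under_antisynchronized_neighbors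
    {k m : ℕ} (B : Matrix (Fin k) (Fin k) ℝ) (σ : ℝ)
    (F H : (Fin m → ℝ) → (Fin m → ℝ))
    (hF : ∀ x, F (-x) = -F x) (hH : ∀ x, H (-x) = -H x)
    (i : Fin k) (π : Fin k → Fin k)
    (hπmem : ∀ j, j ≠ i → π j ≠ i)
    (hπ : ∀ j, j ≠ i → π (π j) = j)
    (s : Fin k → Fin m → ℝ)
    (hs : ∀ j, j ≠ i → s (π j) = -s j)
    (hB : ∀ j, j ≠ i → B i (π j) = B i j)
    (hsi : s i = 0) :
    F (s i) - σ • ∑ j, B i j • H (s j) = 0 :=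
  amplitude_death_invariant_under_antisynchronized_neighbors_general B σ
    (Function.Odd.map_zero hF) hH hπmem (Set.LeftInvOn.injOn hπ) hs hB hsi
end

section
/- Let λ, ω, σ, σ_x, σ_y, W ∈ ℝ with ω ≠ 0, and suppose the discriminant D := (σ W (σ_y − σ_x))² − 4ω² satisfies D ≥ 0. For either sign ε ∈ {−1, +1}, set c = (σ W (σ_y − σ_x) + ε √D)/(2ω), and suppose additionally that λ − ω c − σ σ_x W ≥ 0. Define x* = √((λ − ω c − σ σ_x W)/(1 + c²)) and y* = c x*. Then both (x*, y*) and (−x*, −y*) are solutions of the steady-state Stuart–Landau equations: (λ − (x² + y²)) x − ω y − σ σ_x W x = 0 and (λ − (x² + y²)) y + ω x − σ σ_y W y = 0. (These are the oscillation-death states of a Stuart–Landau cluster with effective coupling weight W.) -/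
/-!
On a line `y = c x`, the first steady-state equation becomes `x` times a prescription of the
squared radius `(1 + c ^ 2) x ^ 2`. Inserting this radius into the second equation cancels `lam`
and leaves `x` times a quadratic in the slope `c`, with discriminant `D`. Hence `c` is a root of
this quadratic, and `x` is recovered from the radius. The second state comes from the
oddness of the vector field.
-/

/-- The steady-state equations of a Stuart–Landau cluster with bifurcation parameter `lam` and
natural frequency `omega`. The coupling enters only through the linear damping rates
`gammax = σ σ_x W` and `gammay = σ σ_y W` of the two components. -/
def IsStuartLandauSteadyState {R : Type*} [CommRing R]
    (lam omega gammax gammay x y : R) : Prop :=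
  (lam - (x ^ 2 + y ^ 2)) * x - omega * y - gammax * x = 0 ∧
    (lam - (x ^ 2 + y ^ 2)) * y + omega * x - gammay * y = 0

namespace IsStuartLandauSteadyState

variable {R : Type*} [CommRing R] {lam omega gammax gammay x y c : R}

theorem neg (h : IsStuartLandauSteadyState lam omega gammax gammay x y) :
    IsStuartLandauSteadyState lam omega gammax gammay (-x) (-y) :=
  ⟨by linear_combination -h.1, by linear_combination -h.2⟩

theorem of_slope_quadratic_eq_zero
    (hslope : omega * (c * c) + -(gammay - gammax) * c + omega = 0)
    (hradius : x ^ 2 * (1 + c ^ 2) = lam - omega * c - gammax) :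
    IsStuartLandauSteadyState lam omega gammax gammay x (c * x) := by
  have hfactor : lam - (x ^ 2 + (c * x) ^ 2) = omega * c + gammax := by
    linear_combination -hradius
  rw [IsStuartLandauSteadyState, hfactor]
  exact ⟨by ring, by linear_combination x * hslope⟩

end IsStuartLandauSteadyState

theorem quadratic_eq_zero_of_eq_sqrt_discrim {a b c x ε : ℝ} (ha : a ≠ 0)
    (hdiscrim : 0 ≤ discrim a b c) (hε : ε * ε = 1)
    (hx : x = (-b + ε * √(discrim a b c)) / (2 * a)) :
    a * (x * x) + b * x + c = 0 := by
  have hsq : discrim a b c = (ε * √(discrim a b c)) * (ε * √(discrim a b c)) := by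
    rw [mul_mul_mul_comm, hε, one_mul, Real.mul_self_sqrt hdiscrim]
  exact (quadratic_eq_zero_iff ha hsq x).mpr (Or.inl hx)

theorem sq_sqrt_div_mul_cancel {r d : ℝ} (hr : 0 ≤ r) (hd : 0 < d) :
    √(r / d) ^ 2 * d = r := by
  rw [Real.sq_sqrt (div_nonneg hr hd.le), div_mul_cancel₀ r hd.ne']

/-- Explicit oscillation-death steady states of a Stuart–Landau cluster with
effective coupling weight `W`: for either sign `ε = ±1`, with
`c = (σW(σ_y − σ_x) + ε√D)/(2ω)` where `D = (σW(σ_y − σ_x))² − 4ω² ≥ 0`, and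
`x* = √((λ − ωc − σσ_xW)/(1 + c²))`, `y* = c x*`, both `(x*, y*)` and `(−x*, −y*)` solve the
steady-state Stuart–Landau equations. -/
theorem stuart_landau_oscillation_death_states
    (lam omega sigma sigmax sigmay W : ℝ) (homega : omega ≠ 0)
    (D : ℝ) (hD : D = (sigma * W * (sigmay - sigmax))^2 - 4 * omega^2)
    (hDpos : 0 ≤ D)
    (eps : ℝ) (heps : eps = -1 ∨ eps = 1)
    (c : ℝ) (hc : c = (sigma * W * (sigmay - sigmax) + eps * Real.sqrt D) / (2 * omega))
    (hrad : 0 ≤ lam - omega * c - sigma * sigmax * W)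
    (xs ys : ℝ)
    (hxs : xs = Real.sqrt ((lam - omega * c - sigma * sigmax * W) / (1 + c^2)))
    (hys : ys = c * xs) :
    ((lam - (xs^2 + ys^2)) * xs - omega * ys - sigma * sigmax * W * xs = 0 ∧
     (lam - (xs^2 + ys^2)) * ys + omega * xs - sigma * sigmay * W * ys = 0) ∧
    ((lam - ((-xs)^2 + (-ys)^2)) * (-xs) - omega * (-ys) - sigma * sigmax * W * (-xs) = 0 ∧
     (lam - ((-xs)^2 + (-ys)^2)) * (-ys) + omega * (-xs) - sigma * sigmay * W * (-ys) = 0) := by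
  have hdiscrim : D = discrim omega (-(sigma * sigmay * W - sigma * sigmax * W)) omega := by
    rw [hD, discrim]
    ring
  have hslope : omega * (c * c) + -(sigma * sigmay * W - sigma * sigmax * W) * c + omega = 0 := by
    refine quadratic_eq_zero_of_eq_sqrt_discrim homega (hdiscrim ▸ hDpos)
      (mul_self_eq_one_iff.mpr heps.symm) ?_
    rw [hc, ← hdiscrim]
    ring
  have hradius : xs ^ 2 * (1 + c ^ 2) = lam - omega * c - sigma * sigmax * W := by
    rw [hxs]
    exact sq_sqrt_div_mul_cancel hrad (by positivity)
  have hsteady : IsStuartLandauSteadyState lam omega (sigma * sigmax * W) (sigma * sigmay * W)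
      xs ys :=
    hys ▸ .of_slope_quadratic_eq_zero hslope hradius
  exact ⟨hsteady, hsteady.neg⟩
end
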